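/- arXiv:2012.13251 — 8 statements merged into one kernel-verified Lean document; each statement's English description precedes it below -/
import Mathlib

section
/- Let (f_k) be a sequence of nonnegative real numbers, (α_k) a sequence of positive real numbers, (η_k) a sequence of positive real numbers with η_k → 0, γ ∈ (0,1), and M ≥ 1 an integer. Suppose that for all k, f_{k+1} ≤ max{f_k, f_{k−1}, …, f_{max(0,k−M+1)}} + η_k − γ α_k² f_k. If inf_k f_k > 0, then liminf_k α_k = 0 (i.e., there is a subsequence of (α_k) converging to 0). -/
open Filter Topology

/-!
If no subsequence of `α` tends to `0`, then `α_k²` is eventually bounded away from `0`, and hence so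
is the forcing term `γ α_k² f_k`, because `f` is bounded away from `0`. Once `η_k` is at most half
of that lower bound, each new term lies below one of the preceding `M` terms by a fixed `δ > 0`.
Every further `M` steps then lower a bound on the tail of `f` by `δ`, so `f` tends to `-∞`, which is
absurd.
-/

theorem bddAbove_range_of_eventually_exists_le {β : Type*} [Preorder β] [IsDirectedOrder β]
    {f : ℕ → β} (h : ∀ᶠ k in atTop, ∃ i ≤ k, f (k + 1) ≤ f i) : BddAbove (Set.range f) := by
  have : Nonempty β := ⟨f 0⟩
  obtain ⟨K, hK⟩ := eventually_atTop.mp h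
  obtain ⟨B, hB⟩ := ((Set.finite_Iic K).image f).bddAbove
  refine ⟨B, Set.forall_mem_range.mpr fun k => ?_⟩
  induction k using Nat.strong_induction_on with
  | _ k ih =>
    rcases le_or_gt k K with hkK | hKk
    · exact hB ⟨k, hkK, rfl⟩
    · obtain ⟨m, rfl⟩ := Nat.exists_eq_add_one_of_ne_zero (Nat.ne_zero_of_lt hKk)
      obtain ⟨i, him, hi⟩ := hK m (Nat.le_of_lt_succ hKk)
      exact hi.trans (ih i (Nat.lt_succ_of_le him))

theorem le_sub_nsmul_of_window_decrease {G : Type*} [AddCommGroup G] [Preorder G]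
    [IsOrderedAddMonoid G] {f : ℕ → G} {K M : ℕ} {B δ : G} (hB : B ∈ upperBounds (Set.range f))
    (h : ∀ k ≥ K, ∃ i ≤ k, k < i + M ∧ f (k + 1) ≤ f i - δ) (n : ℕ) :
    ∀ k > K + n * M, f k ≤ B - n • δ := by
  induction n with
  | zero => simpa only [zero_nsmul, sub_zero] using fun k _ => hB ⟨k, rfl⟩
  | succ n ih =>
    intro k hk
    rw [Nat.succ_mul] at hk
    obtain ⟨m, rfl⟩ := Nat.exists_eq_add_one_of_ne_zero (Nat.ne_zero_of_lt hk)
    obtain ⟨i, -, hmi, hi⟩ := h m (by omega)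
    calc f (m + 1) ≤ f i - δ := hi
      _ ≤ B - n • δ - δ := sub_le_sub_right (ih i (by omega)) δ
      _ = B - (n + 1) • δ := by rw [succ_nsmul, sub_sub]

section Archimedean

variable {G : Type*} [AddCommGroup G] [LinearOrder G] [IsOrderedAddMonoid G] [Archimedean G]
  {f : ℕ → G} {M : ℕ} {δ : G}

theorem tendsto_atBot_of_window_decrease (hδ : 0 < δ)
    (h : ∀ᶠ k in atTop, ∃ i ≤ k, k < i + M ∧ f (k + 1) ≤ f i - δ) :
    Tendsto f atTop atBot := by
  obtain ⟨B, hB⟩ : BddAbove (Set.range f) :=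
    bddAbove_range_of_eventually_exists_le <| h.mono fun k ⟨i, hik, _, hi⟩ =>
      ⟨i, hik, hi.trans (sub_le_self _ hδ.le)⟩
  obtain ⟨K, hK⟩ := eventually_atTop.mp h
  refine tendsto_atBot.mpr fun b => ?_
  obtain ⟨n, hn⟩ := Archimedean.arch (B - b) hδ
  filter_upwards [eventually_gt_atTop (K + n * M)] with k hk
  exact (le_sub_nsmul_of_window_decrease hB hK n k hk).trans (sub_le_comm.mp hn)

theorem frequently_neg_lt_of_le_window_sup'_add {e : ℕ → G} (hM : (Finset.range M).Nonempty)
    (hf : BddBelow (Set.range f))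
    (hrec : ∀ k, f (k + 1) ≤ (Finset.range M).sup' hM (fun j => f (k - j)) + e k) (hδ : 0 < δ) :
    ∃ᶠ k in atTop, -δ < e k := by
  intro he
  have hdecrease : ∀ᶠ k in atTop, ∃ i ≤ k, k < i + M ∧ f (k + 1) ≤ f i - δ := by
    filter_upwards [he] with k hek
    obtain ⟨j, hj, hmax⟩ := Finset.exists_mem_eq_sup' hM fun j => f (k - j)
    have hjM : j < M := Finset.mem_range.mp hj
    refine ⟨k - j, Nat.sub_le k j, by omega, ?_⟩
    calc f (k + 1) ≤ f (k - j) + e k := hmax ▸ hrec k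
      _ ≤ f (k - j) + -δ := by gcongr; exact not_lt.mp hek
      _ = f (k - j) - δ := (sub_eq_add_neg _ _).symm
  have hdiv := tendsto_atBot_of_window_decrease hδ hdecrease
  obtain ⟨b, hb⟩ := hf
  obtain ⟨k, hk⟩ := (hdiv.eventually (eventually_le_atBot (b - δ))).exists
  exact (hk.trans_lt (sub_lt_self b hδ)).not_ge (hb ⟨k, rfl⟩)

end Archimedean

theorem secant_accel_stmt0_general
    (f α η : ℕ → ℝ) (γ : ℝ) (M : ℕ)
    (hη0 : Tendsto η atTop (𝓝 0))
    (hγ0 : 0 < γ)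
    (hM : (Finset.range M).Nonempty)
    (hrec : ∀ k, f (k + 1) ≤
      (Finset.range M).sup' hM (fun j => f (k - j)) + η k - γ * (α k) ^ 2 * f k)
    (hinf : ∃ ε > 0, ∀ k, ε ≤ f k) :
    ∃ φ : ℕ → ℕ, StrictMono φ ∧ Tendsto (fun j => α (φ j)) atTop (𝓝 0) := by
  obtain ⟨ε, hε, hfε⟩ := hinf
  suffices hcluster : MapClusterPt 0 atTop α from hcluster.tendsto_subseq
  refine Metric.nhds_basis_ball.mapClusterPt_iff_frequently.mpr fun a ha => ?_
  have hδ : 0 < γ * a ^ 2 * ε / 2 := by positivity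
  have hfreq := frequently_neg_lt_of_le_window_sup'_add hM
    ⟨ε, Set.forall_mem_range.mpr hfε⟩ (fun k => (hrec k).trans_eq (add_sub_assoc _ _ _)) hδ
  refine (hfreq.and_eventually (hη0.eventually_lt_const hδ)).mono fun k ⟨hforce, hηk⟩ => ?_
  have hlt : γ * α k ^ 2 * ε < γ * a ^ 2 * ε :=
    calc γ * α k ^ 2 * ε ≤ γ * α k ^ 2 * f k := by gcongr; exact hfε k
      _ < γ * a ^ 2 * ε := by linarith [hforce, hηk]
  have hsq : α k ^ 2 < a ^ 2 := lt_of_mul_lt_mul_left (lt_of_mul_lt_mul_right hlt hε.le) hγ0.le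
  exact mem_ball_zero_iff.mpr (abs_lt_of_sq_lt_sq hsq ha.le)

/-- If a nonnegative sequence `f` satisfies the nonmonotone decrease
condition with forcing term `γ α_k² f_k` and perturbations `η_k → 0`, and `inf f_k > 0`,
then some subsequence of `α` tends to `0`. -/
theorem secant_accel_stmt0
    (f α η : ℕ → ℝ) (γ : ℝ) (M : ℕ)
    (hf : ∀ k, 0 ≤ f k)
    (hα : ∀ k, 0 < α k)
    (hη : ∀ k, 0 < η k)
    (hη0 : Tendsto η atTop (𝓝 0))
    (hγ0 : 0 < γ) (hγ1 : γ < 1)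
    (hM : 1 ≤ M)
    (hrec : ∀ k, f (k + 1) ≤
      (Finset.range M).sup' (Finset.nonempty_range_iff.mpr (by omega))
        (fun j => f (k - j)) + η k - γ * (α k) ^ 2 * f k)
    (hinf : ∃ ε > 0, ∀ k, ε ≤ f k) :
    ∃ φ : ℕ → ℕ, StrictMono φ ∧ Tendsto (fun j => α (φ j)) atTop (𝓝 0) :=
  secant_accel_stmt0_general f α η γ M hη0 hγ0 _ hrec hinf
end

section
/- Assume F is continuously differentiable with Jacobian J. Let (x^k), (v^k), (σ_k) be sequences with ‖v^k‖ = ‖F(x^k)‖ and |σ_k| ∈ [σ_min, σ_max] for all k, let d^k = −σ_k v^k, let (η_k) be positive reals, and let f̄_k = max{f(x^k), …, f(x^{max(0,k−M+1)})}. Suppose inf_k ‖F(x^k)‖ > 0 and there is an infinite set K ⊆ ℕ and positive reals α_{k,+}, α_{k,−} (k ∈ K) with α_{k,+} → 0 and α_{k,−} → 0 along K such that, for all k ∈ K, f(x^k + α_{k,+} d^k) > f̄_k + η_k − γ α_{k,+}² f(x^k) and f(x^k − α_{k,−} d^k) > f̄_k + η_k − γ α_{k,−}² f(x^k). If, along K,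 x^k → x_* and v^k → v, then ⟨v, J(x_*)ᵀ F(x_*)⟩ = 0. -/
/-!
A rejected step from `x` along `α • d` decreases `f` by less than `γ α² f(x) = o(α)`, because the
nonmonotone reference value is at least `f(x)`. Strict differentiability of `f = ½‖F‖²` at `x_*`
turns this into an asymptotic lower bound `0` for `f'(x_*) d^k`. The backward steps give the same
bound for `-d^k`, so `f'(x_*) d^k = -σ_k f'(x_*) v^k` tends to `0`, whatever the signs of the `σ_k`.
As `|σ_k| ≥ σ_min > 0`, also `f'(x_*) v^k → 0`.
-/

open Filter Topology
open scoped RealInnerProductSpace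

section StrictDerivative

variable {ι E : Type*} [NormedAddCommGroup E] {l : Filter ι} {a : E} {x d : ι → E}

lemma isLittleO_sub_sub_smul_of_hasStrictFDerivAt {𝕜 G : Type*} [NontriviallyNormedField 𝕜]
    [NormedSpace 𝕜 E] [NormedAddCommGroup G] [NormedSpace 𝕜 G] {f : E → G} {L : E →L[𝕜] G}
    {α : ι → 𝕜} (hf : HasStrictFDerivAt f L a) (hx : Tendsto x l (𝓝 a))
    (hα : Tendsto α l (𝓝 0)) (hd : d =O[l] fun _ => (1 : 𝕜)) :
    (fun j => f (x j + α j • d j) - f (x j) - α j • L (d j)) =o[l] α := by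
  have step_isBigO : (fun j => α j • d j) =O[l] α := by
    simpa using (Asymptotics.isBigO_refl α l).smul hd
  have next_tendsto : Tendsto (fun j => x j + α j • d j) l (𝓝 a) := by
    simpa using hx.add (step_isBigO.trans_tendsto hα)
  have remainder := hf.isLittleO.comp_tendsto (next_tendsto.prodMk_nhds hx)
  simp only [Function.comp_def, add_sub_cancel_left, map_smul] at remainder
  exact remainder.trans_isBigO step_isBigO

variable [NormedSpace ℝ E] {f : E → ℝ} {L : E →L[ℝ] ℝ}

lemma eventually_lt_apply_of_isLittleO_le {α r : ι → ℝ} {b : ℝ}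
    (hf : HasStrictFDerivAt f L a) (hx : Tendsto x l (𝓝 a)) (hd : d =O[l] fun _ => (1 : ℝ))
    (hα : Tendsto α l (𝓝[>] 0)) (hr : r =o[l] α)
    (hle : ∀ᶠ j in l, r j ≤ f (x j + α j • d j) - f (x j)) (hb : b < 0) :
    ∀ᶠ j in l, b < L (d j) := by
  obtain ⟨hα0, hαpos⟩ := tendsto_nhdsWithin_iff.mp hα
  have remainder := hr.sub (isLittleO_sub_sub_smul_of_hasStrictFDerivAt hf hx hα0 hd)
  filter_upwards [hle, hαpos, remainder.def (c := -b / 2) (by linarith)] with j hj hαj hbound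
  rw [Set.mem_Ioi] at hαj
  rw [Real.norm_of_nonneg hαj.le, smul_eq_mul] at hbound
  have : α j * (b / 2) ≤ α j * L (d j) := by linarith [neg_le_of_abs_le hbound]
  linarith [le_of_mul_le_mul_left this hαj]

lemma tendsto_apply_zero_of_isLittleO_le {α β r s : ι → ℝ}
    (hf : HasStrictFDerivAt f L a) (hx : Tendsto x l (𝓝 a)) (hd : d =O[l] fun _ => (1 : ℝ))
    (hα : Tendsto α l (𝓝[>] 0)) (hr : r =o[l] α)
    (hforward : ∀ᶠ j in l, r j ≤ f (x j + α j • d j) - f (x j))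
    (hβ : Tendsto β l (𝓝[>] 0)) (hs : s =o[l] β)
    (hbackward : ∀ᶠ j in l, s j ≤ f (x j - β j • d j) - f (x j)) :
    Tendsto (fun j => L (d j)) l (𝓝 0) := by
  refine tendsto_order.mpr ⟨fun b hb => ?_, fun b hb => ?_⟩
  · exact eventually_lt_apply_of_isLittleO_le hf hx hd hα hr hforward hb
  · have hbackward' : ∀ᶠ j in l, s j ≤ f (x j + β j • (-d) j) - f (x j) := by
      simpa only [Pi.neg_apply, smul_neg, ← sub_eq_add_neg] using hbackward
    filter_upwards [eventually_lt_apply_of_isLittleO_le hf hx hd.neg_left hβ hs hbackward'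
      (neg_lt_zero.mpr hb)] with j hj
    simpa only [Pi.neg_apply, map_neg, neg_lt_neg_iff] using hj

end StrictDerivative

section RejectedSteps

variable {ι : Type*} {l : Filter ι} {σ R : ι → ℝ} {γ σmin σmax : ℝ}

lemma isLittleO_sq_mul_of_isBigO_one {α u : ι → ℝ} (hα : Tendsto α l (𝓝 0))
    (hu : u =O[l] fun _ => (1 : ℝ)) : (fun j => α j ^ 2 * u j) =o[l] α := by
  have hsq : (fun j => α j ^ 2) =o[l] α :=
    (Asymptotics.isLittleO_pow_id one_lt_two).comp_tendsto hα
  simpa only [mul_one] using hsq.mul_isBigO hu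

lemma eventually_neg_le_sub_of_rejected {X : Type*} {f : X → ℝ} {x y : ι → X} {α : ι → ℝ}
    (hR : ∀ᶠ j in l, f (x j) ≤ R j)
    (hrej : ∀ᶠ j in l, R j - γ * α j ^ 2 * f (x j) < f (y j)) :
    ∀ᶠ j in l, -(γ * (α j ^ 2 * f (x j))) ≤ f (y j) - f (x j) := by
  filter_upwards [hR, hrej] with j hRj hrejj
  linarith

variable {E : Type*} [NormedAddCommGroup E] [NormedSpace ℝ E] {v : ι → E}

lemma tendsto_apply_zero_of_tendsto_apply_smul {L : E →L[ℝ] ℝ}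
    (hσmin : 0 < σmin) (hσ : ∀ᶠ j in l, σmin ≤ |σ j|)
    (h : Tendsto (fun j => L (σ j • v j)) l (𝓝 0)) : Tendsto (fun j => L (v j)) l (𝓝 0) := by
  have hO : (fun j => L (v j)) =O[l] fun j => L (σ j • v j) := by
    refine .of_bound σmin⁻¹ ?_
    filter_upwards [hσ] with j hσj
    rw [le_inv_mul_iff₀ hσmin, map_smul, norm_smul, Real.norm_eq_abs (σ j)]
    gcongr
  exact hO.trans_tendsto h

theorem apply_eq_zero_of_rejected_steps [l.NeBot] {f : E → ℝ} {L : E →L[ℝ] ℝ}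
    {x d : ι → E} {a w : E} {αp αm : ι → ℝ}
    (hf : HasStrictFDerivAt f L a) (hσmin : 0 < σmin)
    (hσ : ∀ᶠ j in l, |σ j| ∈ Set.Icc σmin σmax) (hd : ∀ j, d j = -(σ j • v j))
    (hαp : Tendsto αp l (𝓝[>] 0)) (hαm : Tendsto αm l (𝓝[>] 0))
    (hR : ∀ᶠ j in l, f (x j) ≤ R j)
    (hrejp : ∀ᶠ j in l, R j - γ * αp j ^ 2 * f (x j) < f (x j + αp j • d j))
    (hrejm : ∀ᶠ j in l, R j - γ * αm j ^ 2 * f (x j) < f (x j - αm j • d j))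
    (hx : Tendsto x l (𝓝 a)) (hv : Tendsto v l (𝓝 w)) : L w = 0 := by
  have hσ_bdd : σ =O[l] fun _ => (1 : ℝ) :=
    .of_bound σmax (by simpa using hσ.mono fun _ hj => hj.2)
  have hd_bdd : d =O[l] fun _ => (1 : ℝ) := by
    rw [funext hd]
    simpa only [smul_eq_mul, mul_one] using
      (hσ_bdd.smul (hv.isBigO_one ℝ)).neg_left
  have slack {α : ι → ℝ} (hα : Tendsto α l (𝓝[>] 0)) :
      (fun j => -(γ * (α j ^ 2 * f (x j)))) =o[l] α :=
    ((isLittleO_sq_mul_of_isBigO_one (tendsto_nhdsWithin_iff.mp hα).1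
      ((hf.continuousAt.tendsto.comp hx).isBigO_one ℝ)).const_mul_left γ).neg_left
  have hLd : Tendsto (fun j => L (d j)) l (𝓝 0) :=
    tendsto_apply_zero_of_isLittleO_le hf hx hd_bdd
      hαp (slack hαp) (eventually_neg_le_sub_of_rejected hR hrejp)
      hαm (slack hαm) (eventually_neg_le_sub_of_rejected hR hrejm)
  have hLσv : Tendsto (fun j => L (σ j • v j)) l (𝓝 0) := by
    simpa only [hd, map_neg, neg_neg, neg_zero] using hLd.neg
  exact tendsto_nhds_unique ((L.continuous.tendsto w).comp hv)
    (tendsto_apply_zero_of_tendsto_apply_smul hσmin (hσ.mono fun _ hj => hj.1) hLσv)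

end RejectedSteps

section HilbertSpace

variable {E G : Type*} [NormedAddCommGroup E] [InnerProductSpace ℝ E] [CompleteSpace E]
  [NormedAddCommGroup G] [InnerProductSpace ℝ G] [CompleteSpace G]

lemma hasStrictFDerivAt_half_norm_sq {F : E → G} {J : E →L[ℝ] G} {a : E}
    (hF : HasStrictFDerivAt F J a) :
    HasStrictFDerivAt (fun y => (1 / 2) * ‖F y‖ ^ 2)
      (innerSL ℝ (ContinuousLinearMap.adjoint J (F a))) a := by
  refine (((hasStrictFDerivAt_norm_sq (F a)).comp a hF).const_mul (1 / 2 : ℝ)).congr_fderiv ?_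
  ext w
  simp [ContinuousLinearMap.adjoint_inner_left]

/-- The reference value `R` absorbs both the maximum `f̄_k` and the slack `η_k`. -/
theorem secant_accel_stmt2_general {ι : Type*} {l : Filter ι} [l.NeBot]
    {F : E → G} {J : E →L[ℝ] G} {xstar vlim : E} (hF : HasStrictFDerivAt F J xstar)
    {f : E → ℝ} (hf : ∀ y, f y = (1 / 2) * ‖F y‖ ^ 2)
    {x v d : ι → E} {σ αp αm R : ι → ℝ} {γ σmin σmax : ℝ}
    (hσmin : 0 < σmin) (hσ : ∀ j, |σ j| ∈ Set.Icc σmin σmax) (hd : ∀ j, d j = -(σ j • v j))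
    (hαp : ∀ j, 0 < αp j) (hαm : ∀ j, 0 < αm j)
    (hαp0 : Tendsto αp l (𝓝 0)) (hαm0 : Tendsto αm l (𝓝 0)) (hR : ∀ j, f (x j) ≤ R j)
    (hrejp : ∀ j, R j - γ * αp j ^ 2 * f (x j) < f (x j + αp j • d j))
    (hrejm : ∀ j, R j - γ * αm j ^ 2 * f (x j) < f (x j - αm j • d j))
    (hx : Tendsto x l (𝓝 xstar)) (hv : Tendsto v l (𝓝 vlim)) :
    ⟪vlim, ContinuousLinearMap.adjoint J (F xstar)⟫ = 0 := by
  have hf' := hasStrictFDerivAt_half_norm_sq hF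
  rw [← funext hf] at hf'
  rw [real_inner_comm]
  exact apply_eq_zero_of_rejected_steps hf' hσmin (.of_forall hσ) hd
    (tendsto_nhdsWithin_iff.mpr ⟨hαp0, .of_forall hαp⟩)
    (tendsto_nhdsWithin_iff.mpr ⟨hαm0, .of_forall hαm⟩)
    (.of_forall hR) (.of_forall hrejp) (.of_forall hrejm) hx hv

end HilbertSpace

lemma le_sup'_range_sub {α : Type*} [SemilatticeSup α] (u : ℕ → α) {M : ℕ}
    (hM : (Finset.range M).Nonempty) (k : ℕ) :
    u k ≤ (Finset.range M).sup' hM (fun i => u (k - i)) :=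
  Finset.le_sup' (fun i => u (k - i))
    (Finset.mem_range.mpr (Finset.nonempty_range_iff.mp hM).pos)

/-- Lemma 3.2: if `‖F(x^k)‖` is bounded away from zero and along an infinite
subsequence both forward and backward backtracking conditions fail with step sizes tending
to zero, then at the corresponding limit point `x_*` and limit direction `v` one has
`⟨v, J(x_*)ᵀ F(x_*)⟩ = 0`. -/
theorem secant_accel_stmt2 {n : ℕ}
    (F : EuclideanSpace ℝ (Fin n) → EuclideanSpace ℝ (Fin n))
    (hF : ContDiff ℝ 1 F)
    (γ σmin σmax : ℝ) (M : ℕ) (η : ℕ → ℝ)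
    (hγ0 : 0 < γ) (hγ1 : γ < 1)
    (hσmin : 0 < σmin) (hσ : σmin ≤ σmax)
    (hM : 1 ≤ M)
    (hη : ∀ k, 0 < η k)
    (x v d : ℕ → EuclideanSpace ℝ (Fin n)) (σ : ℕ → ℝ)
    (f : EuclideanSpace ℝ (Fin n) → ℝ)
    (hf : ∀ y, f y = (1 / 2) * ‖F y‖ ^ 2)
    (hv : ∀ k, ‖v k‖ = ‖F (x k)‖)
    (hσk : ∀ k, |σ k| ∈ Set.Icc σmin σmax)
    (hd : ∀ k, d k = -(σ k • v k))
    (hbdd : ∃ c > 0, ∀ k, c ≤ ‖F (x k)‖)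
    (φ : ℕ → ℕ) (hφ : StrictMono φ)
    (αp αm : ℕ → ℝ)
    (hαp : ∀ j, 0 < αp j) (hαm : ∀ j, 0 < αm j)
    (hαp0 : Tendsto αp atTop (𝓝 0)) (hαm0 : Tendsto αm atTop (𝓝 0))
    (hviolp : ∀ j, f (x (φ j) + αp j • d (φ j)) >
      (Finset.range M).sup' (Finset.nonempty_range_iff.mpr (by omega))
        (fun i => f (x (φ j - i))) + η (φ j) - γ * (αp j) ^ 2 * f (x (φ j)))
    (hviolm : ∀ j, f (x (φ j) - αm j • d (φ j)) >
      (Finset.range M).sup' (Finset.nonempty_range_iff.mpr (by omega))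
        (fun i => f (x (φ j - i))) + η (φ j) - γ * (αm j) ^ 2 * f (x (φ j)))
    (xstar vlim : EuclideanSpace ℝ (Fin n))
    (hx : Tendsto (fun j => x (φ j)) atTop (𝓝 xstar))
    (hvlim : Tendsto (fun j => v (φ j)) atTop (𝓝 vlim)) :
    ⟪vlim, ContinuousLinearMap.adjoint (fderiv ℝ F xstar) (F xstar)⟫ = 0 :=
  secant_accel_stmt2_general (hF.contDiffAt.hasStrictFDerivAt one_ne_zero) hf hσmin
    (fun j => hσk (φ j)) (fun j => hd (φ j)) hαp hαm hαp0 hαm0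
    (fun j => le_add_of_le_of_nonneg (le_sup'_range_sub (f ∘ x) _ (φ j)) (hη (φ j)).le)
    hviolp hviolm hx hvlim
end

section
/- Assume F is continuous, Σ_k η_k < ∞, (x^k) is an Algorithm-2.1 sequence, and: (Assumption A) there exists c > 0 such that ‖x^{k+1} − x^k‖ ≤ c ‖F(x^k)‖ for all k; (Assumption B) for every ε > 0 there exists δ > 0 such that for every k, ‖x^{k+1} − x^k‖ ≤ δ implies ‖F(x^{k+1}) − F(x^k)‖ ≤ ε. If there exists an infinite set K₁ ⊆ ℕ with ‖F(x^k)‖ → 0 along K₁, then ‖F(x^k)‖ → 0 as k → ∞ and ‖x^{k+1} − x^k‖ → 0 as k → ∞. -/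
open Filter Topology

/-!
Assumptions A and B say that a small residual forces a small next residual, uniformly in `k`, so a
subsequence of vanishing residuals has whole windows of `M` consecutive small residuals arbitrarily
late. The line search bounds each merit value by the maximum of the preceding `M` values plus `η k`;
adding the tail `∑ i ≥ k, η i` to the `k`-th merit value absorbs these errors. For an error-free
line search, a bound that holds on one window holds forever after.
-/

/-- Nonmonotone descent with memory `M` and errors `η`: each value exceeds the maximum of the `M`
values before it by at most the current error. The truncated subtraction `k - j` encodes the shorter
windows at the first indices. -/
def NonmonotoneDescent (M : ℕ) (η a : ℕ → ℝ) : Prop :=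
  ∀ k, ∃ j < M, a (k + 1) ≤ a (k - j) + η k

namespace NonmonotoneDescent

variable {M : ℕ} {η a : ℕ → ℝ}

theorem of_le_sup' {hM : (Finset.range M).Nonempty}
    (h : ∀ k, a (k + 1) ≤ (Finset.range M).sup' hM (fun j => a (k - j)) + η k) :
    NonmonotoneDescent M η a := fun k => by
  obtain ⟨j, hj, hmax⟩ := Finset.exists_mem_eq_sup' hM fun j => a (k - j)
  exact ⟨j, Finset.mem_range.mp hj, hmax ▸ h k⟩

theorem le_of_window_le (h : NonmonotoneDescent M 0 a) {m : ℕ} {C : ℝ}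
    (hwin : ∀ i < M, a (m + i) ≤ C) {k : ℕ} (hk : m ≤ k) : a k ≤ C := by
  induction k using Nat.strong_induction_on with
  | _ k ih =>
    rcases lt_or_ge k (m + M) with hkM | hkM
    · simpa only [Nat.add_sub_cancel' hk] using hwin (k - m) (by lia)
    · obtain ⟨j, hj, hle⟩ := h (k - 1)
      rw [Nat.sub_add_cancel (by lia), Pi.zero_apply, add_zero] at hle
      exact hle.trans (ih (k - 1 - j) (by lia) (by lia))

theorem tendsto_of_window_tendsto_of_zero_error (h : NonmonotoneDescent M 0 a) {L : ℝ}
    (hL : ∀ k, L ≤ a k) {l : Filter ℕ} [l.NeBot]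
    (hwin : ∀ i < M, Tendsto (fun k => a (k + i)) l (𝓝 L)) :
    Tendsto a atTop (𝓝 L) := by
  refine tendsto_order.2 ⟨fun C hC => .of_forall fun k => hC.trans_le (hL k), fun C hC => ?_⟩
  obtain ⟨B, hLB, hBC⟩ := exists_between hC
  have hsmall : ∀ᶠ m in l, ∀ i ∈ Finset.range M, a (m + i) < B :=
    (eventually_all_finset _).2 fun i hi =>
      (hwin i (Finset.mem_range.mp hi)).eventually_lt_const hLB
  obtain ⟨m, hm⟩ := hsmall.exists
  filter_upwards [eventually_ge_atTop m] with k hk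
  exact (h.le_of_window_le (fun i hi => (hm i (Finset.mem_range.mpr hi)).le) hk).trans_lt hBC

theorem add_tail (h : NonmonotoneDescent M η a) (hη : ∀ k, 0 ≤ η k) (hsum : Summable η) :
    NonmonotoneDescent M 0 fun k => a k + ∑' i, η (i + k) := by
  have htail (k : ℕ) : ∑' i, η (i + k) = η k + ∑' i, η (i + (k + 1)) := by
    simpa only [zero_add, add_right_comm _ 1 k, add_assoc] using
      ((summable_nat_add_iff k).2 hsum).tsum_eq_zero_add
  have hanti : Antitone fun k => ∑' i, η (i + k) :=
    antitone_nat_of_succ_le fun k => by linarith [htail k, hη k]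
  intro k
  obtain ⟨j, hj, hle⟩ := h k
  refine ⟨j, hj, ?_⟩
  calc a (k + 1) + ∑' i, η (i + (k + 1))
      ≤ a (k - j) + (η k + ∑' i, η (i + (k + 1))) := by linarith
    _ = a (k - j) + ∑' i, η (i + k) := by rw [← htail]
    _ ≤ a (k - j) + ∑' i, η (i + (k - j)) := add_le_add le_rfl (hanti (Nat.sub_le k j))
    _ = a (k - j) + ∑' i, η (i + (k - j)) + (0 : ℕ → ℝ) k := (add_zero _).symm

theorem tendsto_of_window_tendsto (h : NonmonotoneDescent M η a) (hη : ∀ k, 0 ≤ η k)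
    (hsum : Summable η) {L : ℝ} (hL : ∀ k, L ≤ a k) {l : Filter ℕ} [l.NeBot] (hl : l ≤ atTop)
    (hwin : ∀ i < M, Tendsto (fun k => a (k + i)) l (𝓝 L)) :
    Tendsto a atTop (𝓝 L) := by
  have htail : Tendsto (fun k => ∑' i, η (i + k)) atTop (𝓝 0) := tendsto_sum_nat_add η
  have hlim := (h.add_tail hη hsum).tendsto_of_window_tendsto_of_zero_error
    (fun k => le_add_of_le_of_nonneg (hL k) (tsum_nonneg fun i => hη (i + k)))
    (fun i hi => by
      simpa only [add_zero, Function.comp_def] using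
        (hwin i hi).add ((htail.comp (tendsto_add_atTop_nat i)).mono_left hl))
  simpa only [add_sub_cancel_right, sub_zero] using hlim.sub htail

end NonmonotoneDescent

section Residual

theorem tendsto_half_mul_sq_zero_iff {ι : Type*} {l : Filter ι} {u : ι → ℝ} :
    Tendsto (fun i => 1 / 2 * u i ^ 2) l (𝓝 0) ↔ Tendsto u l (𝓝 0) := by
  refine ⟨fun h => ?_, fun h => by
    simpa only [ne_eq, two_ne_zero, not_false_eq_true, zero_pow, mul_zero] using
      (h.pow 2).const_mul (1 / 2)⟩
  have habs := (h.const_mul 2).sqrt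
  simp only [← mul_assoc, mul_one_div_cancel (two_ne_zero' ℝ), one_mul, mul_zero, Real.sqrt_zero,
    Real.sqrt_sq_eq_abs] at habs
  exact (tendsto_zero_iff_abs_tendsto_zero u).2 habs

variable {E G : Type*} [SeminormedAddCommGroup E] [SeminormedAddCommGroup G]
  {F : E → G} {x : ℕ → E} {c : ℝ} {l : Filter ℕ}

theorem tendsto_norm_step_zero (hA : ∀ k, ‖x (k + 1) - x k‖ ≤ c * ‖F (x k)‖)
    (hF : Tendsto (fun k => ‖F (x k)‖) l (𝓝 0)) :
    Tendsto (fun k => ‖x (k + 1) - x k‖) l (𝓝 0) :=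
  squeeze_zero (fun _ => norm_nonneg _) hA (by simpa only [mul_zero] using hF.const_mul c)

theorem tendsto_norm_residual_succ_zero (hA : ∀ k, ‖x (k + 1) - x k‖ ≤ c * ‖F (x k)‖)
    (hB : ∀ ε > (0 : ℝ), ∃ δ > (0 : ℝ), ∀ k,
      ‖x (k + 1) - x k‖ ≤ δ → ‖F (x (k + 1)) - F (x k)‖ ≤ ε)
    (hF : Tendsto (fun k => ‖F (x k)‖) l (𝓝 0)) :
    Tendsto (fun k => ‖F (x (k + 1))‖) l (𝓝 0) := by
  have hdiff : Tendsto (fun k => F (x (k + 1)) - F (x k)) l (𝓝 0) := by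
    refine NormedAddGroup.tendsto_nhds_zero.2 fun ε hε => ?_
    obtain ⟨δ, hδ, hB⟩ := hB (ε / 2) (half_pos hε)
    filter_upwards [(tendsto_norm_step_zero hA hF).eventually_le_const hδ] with k hk
    exact (hB k hk).trans_lt (half_lt_self hε)
  simpa only [sub_add_cancel, norm_zero, add_zero] using
    (hdiff.add (tendsto_zero_iff_norm_tendsto_zero.2 hF)).norm

theorem tendsto_norm_residual_add_zero (hA : ∀ k, ‖x (k + 1) - x k‖ ≤ c * ‖F (x k)‖)
    (hB : ∀ ε > (0 : ℝ), ∃ δ > (0 : ℝ), ∀ k,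
      ‖x (k + 1) - x k‖ ≤ δ → ‖F (x (k + 1)) - F (x k)‖ ≤ ε)
    (hF : Tendsto (fun k => ‖F (x k)‖) l (𝓝 0)) (i : ℕ) :
    Tendsto (fun k => ‖F (x (k + i))‖) l (𝓝 0) := by
  induction i with
  | zero => exact hF
  | succ i ih =>
    have hmap : Tendsto (fun k => ‖F (x k)‖) (map (· + i) l) (𝓝 0) := tendsto_map'_iff.2 ih
    exact tendsto_map'_iff.1 (tendsto_norm_residual_succ_zero hA hB hmap)

end Residual

theorem secant_accel_stmt6_general {E G : Type*} [SeminormedAddCommGroup E]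
    [SeminormedAddCommGroup G] {F : E → G} {x : ℕ → E} {M : ℕ} {η : ℕ → ℝ} {c : ℝ}
    (hη : ∀ k, 0 ≤ η k) (hsum : Summable η)
    (hdescent : NonmonotoneDescent M η fun k => 1 / 2 * ‖F (x k)‖ ^ 2)
    (hA : ∀ k, ‖x (k + 1) - x k‖ ≤ c * ‖F (x k)‖)
    (hB : ∀ ε > (0 : ℝ), ∃ δ > (0 : ℝ), ∀ k,
      ‖x (k + 1) - x k‖ ≤ δ → ‖F (x (k + 1)) - F (x k)‖ ≤ ε)
    (hcluster : MapClusterPt 0 atTop fun k => ‖F (x k)‖) :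
    Tendsto (fun k => ‖F (x k)‖) atTop (𝓝 0) ∧
    Tendsto (fun k => ‖x (k + 1) - x k‖) atTop (𝓝 0) := by
  obtain ⟨l, hl, hsub⟩ := mapClusterPt_iff_ultrafilter.1 hcluster
  have hwin (i : ℕ) : Tendsto (fun k => 1 / 2 * ‖F (x (k + i))‖ ^ 2) l (𝓝 0) :=
    tendsto_half_mul_sq_zero_iff.2 (tendsto_norm_residual_add_zero hA hB hsub i)
  have hF : Tendsto (fun k => ‖F (x k)‖) atTop (𝓝 0) :=
    tendsto_half_mul_sq_zero_iff.1 <| hdescent.tendsto_of_window_tendsto hη hsum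
      (fun k => by positivity) hl fun i _ => hwin i
  exact ⟨hF, tendsto_norm_step_zero hA hF⟩

/-- Lemma 3.3: if `F` is continuous, `Σ η_k < ∞`, `(x^k)` is an
Algorithm-2.1 sequence satisfying Assumptions A and B, and `‖F(x^k)‖ → 0` along some
infinite subsequence, then `‖F(x^k)‖ → 0` and `‖x^{k+1} − x^k‖ → 0` for the whole
sequence. -/
theorem secant_accel_stmt6 {n : ℕ}
    (F : EuclideanSpace ℝ (Fin n) → EuclideanSpace ℝ (Fin n))
    (hF : Continuous F)
    (γ σmin σmax : ℝ) (M : ℕ) (η : ℕ → ℝ)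
    (hγ0 : 0 < γ) (hγ1 : γ < 1)
    (hσmin : 0 < σmin) (hσ : σmin ≤ σmax)
    (hM : 1 ≤ M)
    (hη : ∀ k, 0 < η k) (hη0 : Tendsto η atTop (𝓝 0))
    (x v d : ℕ → EuclideanSpace ℝ (Fin n)) (σ α : ℕ → ℝ)
    (f : EuclideanSpace ℝ (Fin n) → ℝ)
    (hf : ∀ y, f y = (1 / 2) * ‖F y‖ ^ 2)
    (hv : ∀ k, ‖v k‖ = ‖F (x k)‖)
    (hσk : ∀ k, |σ k| ∈ Set.Icc σmin σmax)
    (hd : ∀ k, d k = σ k • v k ∨ d k = -(σ k • v k))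
    (hα : ∀ k, α k ∈ Set.Ioc (0 : ℝ) 1)
    (harmijo : ∀ k, f (x k + α k • d k) ≤
      (Finset.range M).sup' (Finset.nonempty_range_iff.mpr (by omega))
        (fun j => f (x (k - j))) + η k - γ * (α k) ^ 2 * f (x k))
    (hnext : ∀ k, f (x (k + 1)) ≤ f (x k + α k • d k))
    (hsum : Summable η)
    (hA : ∃ c > (0 : ℝ), ∀ k, ‖x (k + 1) - x k‖ ≤ c * ‖F (x k)‖)
    (hB : ∀ ε > (0 : ℝ), ∃ δ > (0 : ℝ), ∀ k,
      ‖x (k + 1) - x k‖ ≤ δ → ‖F (x (k + 1)) - F (x k)‖ ≤ ε)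
    (hK1 : ∃ φ : ℕ → ℕ, StrictMono φ ∧ Tendsto (fun j => ‖F (x (φ j))‖) atTop (𝓝 0)) :
    Tendsto (fun k => ‖F (x k)‖) atTop (𝓝 0) ∧
    Tendsto (fun k => ‖x (k + 1) - x k‖) atTop (𝓝 0) := by
  obtain rfl : f = fun y => 1 / 2 * ‖F y‖ ^ 2 := funext hf
  obtain ⟨c, -, hA⟩ := hA
  obtain ⟨φ, hφ, hφ0⟩ := hK1
  have hdescent : NonmonotoneDescent M η fun k => 1 / 2 * ‖F (x k)‖ ^ 2 :=
    .of_le_sup' fun k => ((hnext k).trans (harmijo k)).trans (sub_le_self _ (by positivity))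
  exact secant_accel_stmt6_general (fun k => (hη k).le) hsum hdescent hA hB
    (hφ0.mapClusterPt.of_comp hφ.tendsto_atTop)
end

section
/- Let (f_k) be a sequence of nonnegative real numbers, (η_k) a sequence of nonnegative real numbers, and M ≥ 1 an integer. Suppose that for all k, f_{k+1} ≤ max{f_k, f_{k−1}, …, f_{max(0,k−M+1)}} + η_k. Then for every k ≥ M−1 and every integer ℓ ≥ 1, max{f_{k+ℓM}, f_{k+ℓM+1}, …, f_{k+(ℓ+1)M−1}} ≤ max{f_k, f_{k+1}, …, f_{k+M−1}} + Σ_{j=k+M−1}^{k+(ℓ+1)M−2} η_j. -/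
open Filter Topology

/-!
A monotone sequence `B` with `B n + η n ≤ B (n + 1)` that dominates `f` on one window of length `M`
dominates it ever after, since all terms in the maximum bounding `f (n + 1)` are then at most `B n`.
The initial maximum plus the partial sums of `η` is such a sequence.
-/

theorem Icc_sub_two_eq_Ico_sub_one (a : ℕ) {b : ℕ} (hb : 2 ≤ b) :
    Finset.Icc a (b - 2) = Finset.Ico a (b - 1) := by
  ext
  simp only [Finset.mem_Icc, Finset.mem_Ico]
  omega

theorem le_supersolution_of_le_window {α : Type*} [SemilatticeSup α] [Add α] [AddRightMono α]
    {f η B : ℕ → α} {M k : ℕ} (hM : (Finset.range M).Nonempty)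
    (hrec : ∀ n, f (n + 1) ≤ (Finset.range M).sup' hM (fun j => f (n - j)) + η n)
    (hB : Monotone B) (hstep : ∀ n, k + M - 1 ≤ n → B n + η n ≤ B (n + 1))
    (hwindow : ∀ j < M, f (k + j) ≤ B (k + j)) {n : ℕ} (hn : k ≤ n) :
    f n ≤ B n := by
  induction n using Nat.strong_induction_on with
  | _ n ih =>
    by_cases hnM : n < k + M
    · obtain ⟨j, rfl⟩ := Nat.exists_eq_add_of_le hn
      exact hwindow j (by omega)
    · have hM_pos : 0 < M := Finset.nonempty_range_iff.mp hM |>.bot_lt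
      obtain ⟨m, rfl⟩ : ∃ m, n = m + 1 := Nat.exists_eq_add_one.mpr (by omega)
      have hmax : (Finset.range M).sup' hM (fun j => f (m - j)) ≤ B m := by
        refine Finset.sup'_le _ _ fun j hj => ?_
        have hjM : j < M := Finset.mem_range.mp hj
        have hk : k ≤ m - j := by omega
        exact (ih (m - j) (by omega) hk).trans (hB (Nat.sub_le m j))
      calc f (m + 1) ≤ (Finset.range M).sup' hM (fun j => f (m - j)) + η m := hrec m
        _ ≤ B m + η m := by gcongr
        _ ≤ B (m + 1) := hstep m (by omega)

section OrderedAddMonoid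

variable {α : Type*} [SemilatticeSup α] [AddCommMonoid α] [IsOrderedAddMonoid α] {f η : ℕ → α}
  {M : ℕ}

theorem monotone_sum_Ico_right (hη : ∀ j, 0 ≤ η j) (a : ℕ) :
    Monotone fun n => ∑ j ∈ Finset.Ico a n, η j := fun _ _ hmn =>
  Finset.sum_le_sum_of_subset_of_nonneg (Finset.Ico_subset_Ico_right hmn) fun j _ _ => hη j

theorem le_sup'_window_add_sum_Ico (hM : (Finset.range M).Nonempty) (hη : ∀ j, 0 ≤ η j)
    (hrec : ∀ n, f (n + 1) ≤ (Finset.range M).sup' hM (fun j => f (n - j)) + η n)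
    {k n : ℕ} (hn : k ≤ n) :
    f n ≤ (Finset.range M).sup' hM (fun j => f (k + j)) +
      ∑ j ∈ Finset.Ico (k + M - 1) n, η j := by
  refine le_supersolution_of_le_window hM hrec
    (B := fun n => (Finset.range M).sup' hM (fun j => f (k + j)) +
      ∑ j ∈ Finset.Ico (k + M - 1) n, η j)
    ((monotone_sum_Ico_right hη _).const_add _) (fun m hm => ?_) (fun j hj => ?_) hn
  · rw [Finset.sum_Ico_succ_top hm, add_assoc]
  · exact le_add_of_le_of_nonneg
      (Finset.le_sup' (fun j => f (k + j)) (Finset.mem_range.mpr hj))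
      (Finset.sum_nonneg fun i _ => hη i)

theorem secant_accel_stmt7_general (hM : (Finset.range M).Nonempty) (hη : ∀ j, 0 ≤ η j)
    (hrec : ∀ n, f (n + 1) ≤ (Finset.range M).sup' hM (fun j => f (n - j)) + η n) (k ℓ : ℕ) :
    (Finset.range M).sup' hM (fun j => f (k + ℓ * M + j)) ≤
      (Finset.range M).sup' hM (fun j => f (k + j)) +
        ∑ j ∈ Finset.Ico (k + M - 1) (k + (ℓ + 1) * M - 1), η j := by
  refine Finset.sup'_le _ _ fun i hi => ?_
  have hindex : k + ℓ * M + i ≤ k + (ℓ + 1) * M - 1 := by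
    rw [Finset.mem_range] at hi
    rw [add_one_mul]
    omega
  exact (le_sup'_window_add_sum_Ico hM hη hrec (by omega)).trans
    (add_le_add_right (monotone_sum_Ico_right hη _ hindex) _)

end OrderedAddMonoid

/-- For a nonnegative sequence satisfying the nonmonotone recurrence
`f_{k+1} ≤ max{f_k, …, f_{max(0,k−M+1)}} + η_k` with nonnegative `η`, for every
`k ≥ M − 1` and every `ℓ ≥ 1`,
`max{f_{k+ℓM}, …, f_{k+(ℓ+1)M−1}} ≤ max{f_k, …, f_{k+M−1}} + Σ_{j=k+M−1}^{k+(ℓ+1)M−2} η_j`. -/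
theorem secant_accel_stmt7
    (f η : ℕ → ℝ) (M : ℕ)
    (hf : ∀ k, 0 ≤ f k)
    (hη : ∀ k, 0 ≤ η k)
    (hM : 1 ≤ M)
    (hrec : ∀ k, f (k + 1) ≤
      (Finset.range M).sup' (Finset.nonempty_range_iff.mpr (by omega))
        (fun j => f (k - j)) + η k) :
    ∀ k, M - 1 ≤ k → ∀ ℓ : ℕ, 1 ≤ ℓ →
      (Finset.range M).sup' (Finset.nonempty_range_iff.mpr (by omega))
          (fun j => f (k + ℓ * M + j)) ≤
        (Finset.range M).sup' (Finset.nonempty_range_iff.mpr (by omega))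
            (fun j => f (k + j)) +
          ∑ j ∈ Finset.Icc (k + M - 1) (k + (ℓ + 1) * M - 2), η j := by
  intro k _ ℓ hℓ
  have htwo : 2 * 1 ≤ (ℓ + 1) * M := Nat.mul_le_mul (by omega) hM
  rw [Icc_sub_two_eq_Ico_sub_one _ (by omega)]
  exact secant_accel_stmt7_general _ hη hrec k ℓ
end

section
/- Let F : ℝⁿ → ℝⁿ and let (x^k) be a sequence in ℝⁿ such that: there exists c > 0 with ‖x^{k+1} − x^k‖ ≤ c ‖F(x^k)‖ for all k, and for every ε > 0 there exists δ > 0 such that for every k, ‖x^{k+1} − x^k‖ ≤ δ implies ‖F(x^{k+1}) − F(x^k)‖ ≤ ε. If K₁ ⊆ ℕ is an infinite set with ‖F(x^k)‖ → 0 along K₁, then for every fixed integer j ≥ 0, ‖F(x^{k+j})‖ → 0 as k → ∞ along K₁. -/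
/-!
One step of the iteration carries `‖F (x k)‖ → 0` to `‖F (x (k + 1))‖ → 0` along *every* filter on
`ℕ`, since the step `x (k + 1) - x k`, and with it the increment of `F`, tends to zero. Knowing this
for every filter lets it be iterated: shifting the index by `j` only replaces the filter by its
image under `(· + j)`.
-/

open Filter Topology

section

variable {E G : Type*} [SeminormedAddGroup E] [SeminormedAddGroup G]

theorem tendsto_zero_of_forall_norm_le_imp_norm_le {α : Type*} {l : Filter α} {u : α → E}
    {v : α → G} (huv : ∀ ε > (0 : ℝ), ∃ δ > (0 : ℝ), ∀ a, ‖u a‖ ≤ δ → ‖v a‖ ≤ ε)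
    (hu : Tendsto u l (𝓝 0)) : Tendsto v l (𝓝 0) := by
  refine Metric.nhds_basis_closedBall.tendsto_right_iff.2 fun ε hε => ?_
  obtain ⟨δ, hδ, hδε⟩ := huv ε hε
  filter_upwards [hu.eventually_mem (Metric.closedBall_mem_nhds 0 hδ)] with a ha
  exact mem_closedBall_zero_iff.2 (hδε a (mem_closedBall_zero_iff.1 ha))

theorem tendsto_norm_succ_of_norm_step_le {x : ℕ → E} {y : ℕ → G} {c : ℝ}
    (hstep : ∀ k, ‖x (k + 1) - x k‖ ≤ c * ‖y k‖)
    (hcont : ∀ ε > (0 : ℝ), ∃ δ > (0 : ℝ), ∀ k,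
      ‖x (k + 1) - x k‖ ≤ δ → ‖y (k + 1) - y k‖ ≤ ε)
    {l : Filter ℕ} (hy : Tendsto (fun k => ‖y k‖) l (𝓝 0)) :
    Tendsto (fun k => ‖y (k + 1)‖) l (𝓝 0) := by
  have hx_step : Tendsto (fun k => x (k + 1) - x k) l (𝓝 0) :=
    squeeze_zero_norm hstep (by simpa only [mul_zero] using hy.const_mul c)
  have hy_step : Tendsto (fun k => ‖y (k + 1) - y k‖) l (𝓝 0) :=
    tendsto_zero_iff_norm_tendsto_zero.1
      (tendsto_zero_of_forall_norm_le_imp_norm_le hcont hx_step)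
  have htriangle (k : ℕ) : ‖y (k + 1)‖ ≤ ‖y (k + 1) - y k‖ + ‖y k‖ := by
    simpa only [sub_add_cancel] using norm_add_le (y (k + 1) - y k) (y k)
  exact squeeze_zero (fun _ => norm_nonneg _) htriangle
    (by simpa only [add_zero] using hy_step.add hy)

theorem secant_accel_stmt8_general (F : E → G) (x : ℕ → E)
    (hA : ∃ c : ℝ, ∀ k, ‖x (k + 1) - x k‖ ≤ c * ‖F (x k)‖)
    (hB : ∀ ε > (0 : ℝ), ∃ δ > (0 : ℝ), ∀ k,
      ‖x (k + 1) - x k‖ ≤ δ → ‖F (x (k + 1)) - F (x k)‖ ≤ ε)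
    {l : Filter ℕ} (hl : Tendsto (fun k => ‖F (x k)‖) l (𝓝 0)) (j : ℕ) :
    Tendsto (fun k => ‖F (x (k + j))‖) l (𝓝 0) := by
  obtain ⟨c, hstep⟩ := hA
  induction j with
  | zero => exact hl
  | succ j ih =>
    have hshift : Tendsto (fun k => ‖F (x k)‖) (map (· + j) l) (𝓝 0) := tendsto_map'_iff.2 ih
    exact tendsto_map'_iff.1
      (tendsto_norm_succ_of_norm_step_le (y := fun k => F (x k)) hstep hB hshift)

end

/-- if `‖x^{k+1} − x^k‖ ≤ c ‖F(x^k)‖`, `F` is uniformly continuous along the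
sequence, and `‖F(x^k)‖ → 0` along an infinite subsequence (indexed by a strictly
monotone `φ`), then for every fixed shift `j`, `‖F(x^{k+j})‖ → 0` along that
subsequence. -/
theorem secant_accel_stmt8 {n : ℕ}
    (F : EuclideanSpace ℝ (Fin n) → EuclideanSpace ℝ (Fin n))
    (x : ℕ → EuclideanSpace ℝ (Fin n))
    (hA : ∃ c > (0 : ℝ), ∀ k, ‖x (k + 1) - x k‖ ≤ c * ‖F (x k)‖)
    (hB : ∀ ε > (0 : ℝ), ∃ δ > (0 : ℝ), ∀ k,
      ‖x (k + 1) - x k‖ ≤ δ → ‖F (x (k + 1)) - F (x k)‖ ≤ ε)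
    (φ : ℕ → ℕ) (hφ : StrictMono φ)
    (hK1 : Tendsto (fun i => ‖F (x (φ i))‖) atTop (𝓝 0)) :
    ∀ j : ℕ, Tendsto (fun i => ‖F (x (φ i + j))‖) atTop (𝓝 0) := by
  obtain ⟨c, -, hstep⟩ := hA
  exact fun j => tendsto_map'_iff.1
    (secant_accel_stmt8_general F x ⟨c, hstep⟩ hB (tendsto_map'_iff.2 hK1) j)
end

section
/- Let F : ℝⁿ → ℝⁿ, x_* ∈ ℝⁿ, and δ > 0 be such that ‖F(x)‖ > 0 whenever 0 < ‖x − x_*‖ ≤ δ, and such that the infimum of ‖F(x)‖ over each annulus {x : ε ≤ ‖x − x_*‖ ≤ δ} is positive for every ε ∈ (0, δ] (this holds, in particular, when F is continuous). Let (x^k) be a sequence in ℝⁿ with ‖F(x^k)‖ → 0, ‖x^{k+1} − x^k‖ → 0, and such that some subsequence of (x^k) converges to x_*. Then the whole sequence (x^k) converges to x_*. -/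
open Filter Topology

/-! Once `f (x k)` is below the lower bound of `f` on the annulus `r ≤ dist y a ≤ δ`, no term can
lie in that annulus, and if `r + c ≤ δ`, steps of length at most `c` cannot jump over it from the
inner ball. So a late term in the ball of radius `r`, which the cluster point provides, traps all
later ones there. -/

theorem eventually_of_frequently_of_eventually_imp_succ {p : ℕ → Prop}
    (hp : ∃ᶠ k in atTop, p k) (hsucc : ∀ᶠ k in atTop, p k → p (k + 1)) :
    ∀ᶠ k in atTop, p k := by
  obtain ⟨N, hN⟩ := eventually_atTop.1 hsucc
  obtain ⟨M, hNM, hM⟩ := frequently_atTop.1 hp N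
  exact eventually_atTop.2 ⟨M, fun k hk =>
    Nat.le_induction hM (fun j hj => hN j (hNM.trans hj)) k hk⟩

section Annulus

open Metric

variable {X : Type*} [PseudoMetricSpace X] {a : X} {c δ : ℝ}

theorem mem_ball_of_dist_le_of_notMem_annulus {r : ℝ} {y z : X} (hr : r + c ≤ δ)
    (hz : z ∈ ball a r) (hyz : dist y z ≤ c) (hy : y ∉ closedBall a δ \ ball a r) :
    y ∈ ball a r := by
  have hyδ : y ∈ closedBall a δ := mem_closedBall.2 <|
    calc dist y a ≤ dist y z + dist z a := dist_triangle y z a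
      _ ≤ c + r := add_le_add hyz (mem_ball.1 hz).le
      _ ≤ δ := by rwa [add_comm]
  by_contra hyr
  exact hy ⟨hyδ, hyr⟩

theorem tendsto_of_mapClusterPt_of_eventually_notMem_annulus {x : ℕ → X} (hcδ : c < δ)
    (hann : ∀ r, 0 < r → r ≤ δ → ∀ᶠ k in atTop, x k ∉ closedBall a δ \ ball a r)
    (hstep : ∀ᶠ k in atTop, dist (x (k + 1)) (x k) ≤ c) (ha : MapClusterPt a atTop x) :
    Tendsto x atTop (𝓝 a) := by
  refine nhds_basis_ball.tendsto_right_iff.2 fun ε hε => ?_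
  have hc : 0 ≤ c := hstep.exists.elim fun _ hk => dist_nonneg.trans hk
  obtain ⟨r, hr, hrε, hrδ⟩ : ∃ r, 0 < r ∧ r ≤ ε ∧ r ≤ δ - c :=
    ⟨min ε (δ - c), lt_min hε (sub_pos.2 hcδ), min_le_left _ _, min_le_right _ _⟩
  have hfreq : ∃ᶠ k in atTop, x k ∈ ball a r := ha.frequently (ball_mem_nhds a hr)
  have hsucc : ∀ᶠ k in atTop, x k ∈ ball a r → x (k + 1) ∈ ball a r := by
    filter_upwards [hstep, (tendsto_add_atTop_nat 1).eventually (hann r hr (by linarith))]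
      with k hk hkann hkr
    exact mem_ball_of_dist_le_of_notMem_annulus (by linarith) hkr hk hkann
  exact (eventually_of_frequently_of_eventually_imp_succ hfreq hsucc).mono
    fun _ hk => ball_subset_ball hrε hk

end Annulus

theorem secant_accel_stmt10_general {X : Type*} [PseudoMetricSpace X] {f : X → ℝ} {a : X}
    {c δ : ℝ} (hcδ : c < δ)
    (hinf : ∀ ε : ℝ, 0 < ε → ε ≤ δ →
      ∃ m > (0 : ℝ), ∀ y, ε ≤ dist y a → dist y a ≤ δ → m ≤ f y)
    {x : ℕ → X} (hf0 : Tendsto (fun k => f (x k)) atTop (𝓝 0))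
    (hstep : ∀ᶠ k in atTop, dist (x (k + 1)) (x k) ≤ c) (ha : MapClusterPt a atTop x) :
    Tendsto x atTop (𝓝 a) := by
  refine tendsto_of_mapClusterPt_of_eventually_notMem_annulus hcδ (fun r hr hrδ => ?_) hstep ha
  obtain ⟨m, hm, hmf⟩ := hinf r hr hrδ
  filter_upwards [hf0.eventually_lt_const hm] with k hk ⟨hkδ, hkr⟩
  exact hk.not_ge (hmf (x k) (not_lt.1 hkr) hkδ)

/-- if `‖F‖` is positive on the punctured ball around `x_*` of radius `δ`
and bounded below by a positive constant on each annulus `{ε ≤ ‖x − x_*‖ ≤ δ}`, and a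
sequence satisfies `‖F(x^k)‖ → 0`, `‖x^{k+1} − x^k‖ → 0`, and has a subsequence
converging to `x_*`, then the whole sequence converges to `x_*`. -/
theorem secant_accel_stmt10 {n : ℕ}
    (F : EuclideanSpace ℝ (Fin n) → EuclideanSpace ℝ (Fin n))
    (xstar : EuclideanSpace ℝ (Fin n)) (δ : ℝ) (hδ : 0 < δ)
    (hpos : ∀ y, 0 < ‖y - xstar‖ → ‖y - xstar‖ ≤ δ → 0 < ‖F y‖)
    (hinf : ∀ ε : ℝ, 0 < ε → ε ≤ δ →
      ∃ m > (0 : ℝ), ∀ y, ε ≤ ‖y - xstar‖ → ‖y - xstar‖ ≤ δ → m ≤ ‖F y‖)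
    (x : ℕ → EuclideanSpace ℝ (Fin n))
    (hF0 : Tendsto (fun k => ‖F (x k)‖) atTop (𝓝 0))
    (hstep : Tendsto (fun k => ‖x (k + 1) - x k‖) atTop (𝓝 0))
    (hsub : ∃ φ : ℕ → ℕ, StrictMono φ ∧ Tendsto (fun j => x (φ j)) atTop (𝓝 xstar)) :
    Tendsto x atTop (𝓝 xstar) := by
  obtain ⟨φ, hφ, hlim⟩ := hsub
  simp only [← dist_eq_norm] at hinf hstep
  exact secant_accel_stmt10_general (half_lt_self hδ) hinf hF0
    (hstep.eventually_le_const (half_pos hδ)) (hlim.mapClusterPt.of_comp hφ.tendsto_atTop)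
end

section
/- Let F : ℝⁿ → ℝⁿ be differentiable with Jacobian J Lipschitz continuous on an open convex set containing all terms of a sequence (x^k). Define s^k = x^{k+1} − x^k and y^k = F(x^{k+1}) − F(x^k), and suppose for all k ≥ k₀: s^k ≠ 0, (s^{k−1})ᵀ y^{k−1} ≠ 0, and x^{k+1} = x^k − (1/κ_k) F(x^k) where κ_k = (s^{k−1})ᵀ y^{k−1} / ‖s^{k−1}‖². Assume x^k → x_* with J(x_*) invertible, and s^k/‖s^k‖ → s for some s ∈ ℝⁿ. Then: (a) κ_{k+1} → sᵀ J(x_*) s; (b) F(x_*) = 0; and (c) x^k converges Q-superlinearly to x_*, i.e., ‖x^{k+1} − x_*‖ / ‖x^k − x_*‖ → 0. -/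
open Filter Topology
open scoped RealInnerProductSpace

/-!
The iteration reads `F (x k) = -κ k • s k`, and the secants satisfy `y k = J (s k) + o(‖s k‖)`, so
`κ (k + 1)` tends to `⟪u, J u⟫`, where `u` is the limit direction of the steps, and
`F (x k) → 0`. Hence `F (x (k + 1)) / ‖s k‖ = (y k - κ k • s k) / ‖s k‖` tends to
`J u - ⟪u, J u⟫ • u`, which is orthogonal to `u`. But `F (x (k + 1))` is also a multiple of
`s (k + 1)`, whose direction tends to `u`; so that limit is a multiple of `u`, hence zero, and
`F (x (k + 1)) = o(‖s k‖)`. As `J` is bounded below, the error at step `k + 1` is then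
`o(‖s k‖)`, hence `o` of the error at step `k`, since `s k` is the difference of the two errors.
-/

section StrictDerivative

variable {E G : Type*} [NormedAddCommGroup E] [NormedSpace ℝ E]
  [NormedAddCommGroup G] [NormedSpace ℝ G] {f : E → G}

lemma hasFDerivAtFilter_nhdsWithin_prod_of_tendsto {f' : E → E →L[ℝ] G} {A : E →L[ℝ] G}
    {K : Set E} {p : E} (hK : Convex ℝ K) (hf : ∀ z ∈ K, HasFDerivWithinAt f (f' z) K z)
    (hf' : Tendsto f' (𝓝[K] p) (𝓝 A)) :
    HasFDerivAtFilter f A (𝓝[K] p ×ˢ 𝓝[K] p) := by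
  refine .of_isLittleO (Asymptotics.isLittleO_iff.2 fun ε hε => ?_)
  obtain ⟨δ, hδ, hball⟩ := Metric.mem_nhdsWithin_iff.1 (hf' (Metric.closedBall_mem_nhds A hε))
  have hmem : Metric.ball p δ ∩ K ∈ 𝓝[K] p :=
    inter_mem (mem_nhdsWithin_of_mem_nhds (Metric.ball_mem_nhds p hδ)) self_mem_nhdsWithin
  filter_upwards [prod_mem_prod hmem hmem] with ⟨a, b⟩ ⟨ha, hb⟩
  exact ((convex_ball p δ).inter hK).norm_image_sub_le_of_norm_hasFDerivWithin_le'
    (fun z hz => (hf z hz.2).mono Set.inter_subset_right)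
    (fun z hz => mem_closedBall_iff_norm.1 (hball hz)) hb ha

-- The limit of the derivatives at a boundary point is the derivative there, because a convex set
-- with nonempty interior has unique derivatives at all points of its closure.
lemma continuousOn_fderiv_closure [CompleteSpace G] {U : Set E} (hUopen : IsOpen U)
    (hUconv : Convex ℝ U) (hf : ∀ z ∈ closure U, DifferentiableAt ℝ f z)
    (hf' : UniformContinuousOn (fderiv ℝ f) U) :
    ContinuousOn (fderiv ℝ f) (closure U) := by
  have hlim : ∀ z ∈ closure U, Tendsto (fderiv ℝ f) (𝓝[U] z) (𝓝 (fderiv ℝ f z)) := by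
    intro z hz
    have : (𝓝[U] z).NeBot := mem_closure_iff_nhdsWithin_neBot.1 hz
    obtain ⟨A, hA⟩ := cauchy_map_iff_exists_tendsto.1
      ((cauchy_nhds.mono (nhdsWithin_le_nhds (a := z))).map_of_le hf' inf_le_right)
    have hzA : HasFDerivWithinAt f A U z :=
      (hasFDerivWithinAt_closure_of_tendsto_fderiv
        (fun w hw => (hf w (subset_closure hw)).differentiableWithinAt) hUconv hUopen
        (fun w hw => (hf w hw).continuousAt.continuousWithinAt) hA).mono subset_closure
    have hunique : UniqueDiffWithinAt ℝ U z :=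
      uniqueDiffWithinAt_convex hUconv
        (hUopen.interior_eq.symm ▸ closure_nonempty_iff.1 ⟨z, hz⟩) hz
    rwa [hunique.eq (hf z hz).hasFDerivAt.hasFDerivWithinAt hzA]
  exact (continuousOn_extendFrom subset_rfl fun z hz => ⟨_, hlim z hz⟩).congr
    fun z hz => (extendFrom_eq hz (hlim z hz)).symm

lemma hasFDerivAtFilter_closure_of_uniformContinuousOn_fderiv [CompleteSpace G] {U : Set E} {p : E}
    (hUopen : IsOpen U) (hUconv : Convex ℝ U) (hf : ∀ z ∈ closure U, DifferentiableAt ℝ f z)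
    (hf' : UniformContinuousOn (fderiv ℝ f) U) (hp : p ∈ closure U) :
    HasFDerivAtFilter f (fderiv ℝ f p) (𝓝[closure U] p ×ˢ 𝓝[closure U] p) :=
  hasFDerivAtFilter_nhdsWithin_prod_of_tendsto hUconv.closure
    (fun z hz => (hf z hz).hasFDerivAt.hasFDerivWithinAt)
    (continuousOn_fderiv_closure hUopen hUconv hf hf' p hp)

end StrictDerivative

section Directions

variable {ι E G : Type*} {l : Filter ι} [NormedAddCommGroup E]
  [NormedAddCommGroup G] [NormedSpace ℝ G] {s : ι → E}

lemma isLittleO_iff_tendsto_inv_norm_smul {r : ι → G} (h : ∀ᶠ k in l, s k = 0 → r k = 0) :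
    r =o[l] s ↔ Tendsto (fun k => ‖s k‖⁻¹ • r k) l (𝓝 0) := by
  rw [← Asymptotics.isLittleO_norm_norm, Asymptotics.isLittleO_iff_tendsto' (by simpa using h),
    tendsto_zero_iff_norm_tendsto_zero (f := fun k => ‖s k‖⁻¹ • r k)]
  simp only [norm_smul, norm_inv, norm_norm, div_eq_inv_mul]

variable [NormedSpace ℝ E]

lemma tendsto_inv_norm_smul_of_sub_map_isLittleO {y : ι → G} {A : E →L[ℝ] G} {u : E}
    (hy : (fun k => y k - A (s k)) =o[l] s) (hs : Tendsto (fun k => ‖s k‖⁻¹ • s k) l (𝓝 u)) :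
    Tendsto (fun k => ‖s k‖⁻¹ • y k) l (𝓝 (A u)) := by
  have hzero : ∀ᶠ k in l, s k = 0 → y k - A (s k) = 0 := by
    filter_upwards [hy.bound one_pos] with k hk hsk
    simpa [hsk] using hk
  have hrem : Tendsto (fun k => ‖s k‖⁻¹ • (y k - A (s k))) l (𝓝 0) :=
    (isLittleO_iff_tendsto_inv_norm_smul hzero).1 hy
  simpa [smul_sub] using hrem.add ((A.continuous.tendsto u).comp hs)

lemma norm_eq_one_of_tendsto_inv_norm_smul [l.NeBot] {u : E} (hne : ∀ᶠ k in l, s k ≠ 0)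
    (hs : Tendsto (fun k => ‖s k‖⁻¹ • s k) l (𝓝 u)) : ‖u‖ = 1 :=
  tendsto_nhds_unique hs.norm <| tendsto_const_nhds.congr' <|
    hne.mono fun _ hk => (norm_smul_inv_norm (𝕜 := ℝ) hk).symm

end Directions

lemma eq_neg_smul_sub_of_eq_sub_inv_smul {𝕜 V : Type*} [DivisionRing 𝕜] [AddCommGroup V]
    [Module 𝕜 V] {a b r : V} {c : 𝕜} (h : b = a - c⁻¹ • r) (hne : b - a ≠ 0) :
    r = -(c • (b - a)) := by
  have hc : c ≠ 0 := by
    rintro rfl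
    simp [h] at hne
  rw [h, sub_sub_cancel_left, smul_neg, neg_neg, smul_inv_smul₀ hc]

lemma eq_zero_of_tendsto_of_mem_span_singleton {𝕜 ι E : Type*} [RCLike 𝕜] [NormedAddCommGroup E]
    [InnerProductSpace 𝕜 E] {l : Filter ι} [l.NeBot] {d w : ι → E} {u v : E} (hu : u ≠ 0)
    (hd : Tendsto d l (𝓝 u)) (hw : Tendsto w l (𝓝 v))
    (hmem : ∀ᶠ k in l, w k ∈ Submodule.span 𝕜 {d k}) (huv : inner 𝕜 u v = 0) : v = 0 := by
  have hproj : inner 𝕜 u v • u = inner 𝕜 u u • v := by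
    refine tendsto_nhds_unique ((hd.inner hw).smul hd) (((hd.inner hd).smul hw).congr' ?_)
    filter_upwards [hmem] with k hk
    obtain ⟨a, ha⟩ := Submodule.mem_span_singleton.1 hk
    rw [← ha, inner_smul_right, smul_smul, mul_comm]
  rw [huv, zero_smul, eq_comm, smul_eq_zero] at hproj
  exact hproj.resolve_left (inner_self_ne_zero.2 hu)

section SpectralResidual

variable {E : Type*} [NormedAddCommGroup E] [InnerProductSpace ℝ E]

lemma tendsto_inner_div_norm_sq {ι : Type*} {l : Filter ι} {s y : ι → E} {u v : E}
    (hs : Tendsto (fun k => ‖s k‖⁻¹ • s k) l (𝓝 u))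
    (hy : Tendsto (fun k => ‖s k‖⁻¹ • y k) l (𝓝 v)) :
    Tendsto (fun k => ⟪s k, y k⟫ / ‖s k‖ ^ 2) l (𝓝 ⟪u, v⟫) := by
  refine (hs.inner hy).congr fun k => ?_
  rw [real_inner_smul_left, real_inner_smul_right]
  ring

lemma residual_isLittleO_step {r s y : ℕ → E} {κ : ℕ → ℝ} {u v : E}
    (hne : ∀ᶠ k in atTop, s k ≠ 0) (hs : Tendsto (fun k => ‖s k‖⁻¹ • s k) atTop (𝓝 u))
    (hy : Tendsto (fun k => ‖s k‖⁻¹ • y k) atTop (𝓝 v)) (hκ : Tendsto κ atTop (𝓝 ⟪u, v⟫))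
    (hr : ∀ᶠ k in atTop, r k = -(κ k • s k)) (hry : ∀ᶠ k in atTop, y k = r (k + 1) - r k) :
    (fun k => r (k + 1)) =o[atTop] s := by
  have hu : ‖u‖ = 1 := norm_eq_one_of_tendsto_inv_norm_smul hne hs
  have hlim : Tendsto (fun k => ‖s k‖⁻¹ • r (k + 1)) atTop (𝓝 (v - ⟪u, v⟫ • u)) := by
    refine (hy.sub (hκ.smul hs)).congr' ?_
    filter_upwards [hr, hry] with k hrk hyk
    rw [hyk, hrk, smul_comm (κ k), ← smul_sub, sub_neg_eq_add, add_sub_cancel_right]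
  have horth : ⟪u, v - ⟪u, v⟫ • u⟫ = 0 := by
    rw [inner_sub_right, real_inner_smul_right, real_inner_self_eq_norm_sq, hu]
    ring
  have hmem : ∀ᶠ k in atTop,
      ‖s k‖⁻¹ • r (k + 1) ∈ Submodule.span ℝ {‖s (k + 1)‖⁻¹ • s (k + 1)} := by
    filter_upwards [(tendsto_add_atTop_nat 1).eventually hne,
      (tendsto_add_atTop_nat 1).eventually hr] with k hk hrk
    rw [Submodule.span_singleton_smul_eq (inv_ne_zero (norm_ne_zero_iff.2 hk)).isUnit, hrk]
    exact Submodule.smul_mem _ _ <| neg_mem <| Submodule.smul_mem _ _ <|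
      Submodule.mem_span_singleton_self _
  have hzero : v - ⟪u, v⟫ • u = 0 :=
    eq_zero_of_tendsto_of_mem_span_singleton (norm_ne_zero_iff.1 (hu ▸ one_ne_zero))
      (hs.comp (tendsto_add_atTop_nat 1)) hlim hmem horth
  exact (isLittleO_iff_tendsto_inv_norm_smul (hne.mono fun k hk h => absurd h hk)).2 (hzero ▸ hlim)

-- `hF` says that `J` is a strict derivative of `F` at `p` relative to `K`, and `hJ` that `J` is
-- bounded below.
theorem secant_accel_stmt12_general {F : E → E} {J : E →L[ℝ] E} {K : Set E} {p : E}
    (hF : HasFDerivAtFilter F J (𝓝[K] p ×ˢ 𝓝[K] p)) (hp : p ∈ K) (hJ : IsInducing J)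
    {x s y : ℕ → E} {κ : ℕ → ℝ} (hx : Tendsto x atTop (𝓝[K] p))
    (hs : ∀ k, s k = x (k + 1) - x k) (hy : ∀ k, y k = F (x (k + 1)) - F (x k))
    (hne : ∀ᶠ k in atTop, s k ≠ 0)
    (hκ : ∀ᶠ k in atTop, κ (k + 1) = ⟪s k, y k⟫ / ‖s k‖ ^ 2)
    (hiter : ∀ᶠ k in atTop, x (k + 1) = x k - (κ k)⁻¹ • F (x k))
    {u : E} (hu : Tendsto (fun k => ‖s k‖⁻¹ • s k) atTop (𝓝 u)) :
    Tendsto (fun k => κ (k + 1)) atTop (𝓝 ⟪u, J u⟫) ∧ F p = 0 ∧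
      Tendsto (fun k => ‖x (k + 1) - p‖ / ‖x k - p‖) atTop (𝓝 0) := by
  have hx' : Tendsto (fun k => x (k + 1)) atTop (𝓝[K] p) := hx.comp (tendsto_add_atTop_nat 1)
  have hFp : HasFDerivWithinAt F J K p :=
    hF.mono (prod_mono_right _ (pure_le_nhdsWithin hp))
  have hsecant : (fun k => y k - J (s k)) =o[atTop] s := by
    simpa only [Function.comp_def, ← hs, ← hy] using hF.isLittleO.comp_tendsto (hx'.prodMk hx)
  have hyu : Tendsto (fun k => ‖s k‖⁻¹ • y k) atTop (𝓝 (J u)) :=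
    tendsto_inv_norm_smul_of_sub_map_isLittleO hsecant hu
  have hκlim : Tendsto (fun k => κ (k + 1)) atTop (𝓝 ⟪u, J u⟫) :=
    (tendsto_inner_div_norm_sq hu hyu).congr' (hκ.mono fun _ hk => hk.symm)
  have hκlim' : Tendsto κ atTop (𝓝 ⟪u, J u⟫) := (tendsto_add_atTop_iff_nat 1).1 hκlim
  have hres : ∀ᶠ k in atTop, F (x k) = -(κ k • s k) := by
    filter_upwards [hiter, hne] with k hk hnek
    rw [hs] at hnek ⊢
    exact eq_neg_smul_sub_of_eq_sub_inv_smul hk hnek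
  have hroot : F p = 0 := by
    have hstep : Tendsto s atTop (𝓝 0) := by
      simpa [← hs] using (hx'.mono_right nhdsWithin_le_nhds).sub (hx.mono_right nhdsWithin_le_nhds)
    refine tendsto_nhds_unique (hFp.continuousWithinAt.tendsto.comp hx) ?_
    simpa [Function.comp_def] using (hκlim'.smul hstep).neg.congr' (hres.mono fun _ hk => hk.symm)
  have herr : (fun k => x (k + 1) - p) =o[atTop] s := by
    have hbound : (fun k => x (k + 1) - p) =O[atTop] fun k => F (x (k + 1)) := by
      simpa [Function.comp_def, hroot] using (hFp.isTheta_sub hJ).isBigO_symm.comp_tendsto hx'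
    exact hbound.trans_isLittleO
      (residual_isLittleO_step hne hu hyu hκlim' hres (.of_forall hy))
  have hsuper : (fun k => x (k + 1) - p) =o[atTop] fun k => x k - p :=
    herr.trans_isBigO <| by simpa [hs] using herr.right_isBigO_sub.neg_right
  exact ⟨hκlim, hroot, hsuper.norm_norm.tendsto_div_nhds_zero⟩

end SpectralResidual

/-- Theorem 3.5: for the spectral residual iteration
`x^{k+1} = x^k − κ_k⁻¹ F(x^k)` with `κ_k = ⟨s^{k−1}, y^{k−1}⟩/‖s^{k−1}‖²`, if `x^k → x_*`
with `J(x_*)` invertible and `s^k/‖s^k‖ → s`, then `κ_{k+1} → sᵀ J(x_*) s`, `F(x_*) = 0`,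
and the convergence is Q-superlinear. -/
theorem secant_accel_stmt12 {n : ℕ}
    (F : EuclideanSpace ℝ (Fin n) → EuclideanSpace ℝ (Fin n))
    (hF : Differentiable ℝ F)
    (U : Set (EuclideanSpace ℝ (Fin n))) (hUopen : IsOpen U) (hUconv : Convex ℝ U)
    (L : ℝ) (hL : 0 < L)
    (hLip : ∀ a ∈ U, ∀ b ∈ U, ‖fderiv ℝ F a - fderiv ℝ F b‖ ≤ L * ‖a - b‖)
    (x : ℕ → EuclideanSpace ℝ (Fin n)) (hxU : ∀ k, x k ∈ U)
    (s y : ℕ → EuclideanSpace ℝ (Fin n)) (κ : ℕ → ℝ) (k₀ : ℕ) (hk₀ : 1 ≤ k₀)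
    (hs : ∀ k, s k = x (k + 1) - x k)
    (hy : ∀ k, y k = F (x (k + 1)) - F (x k))
    (hsne : ∀ k, k₀ ≤ k → s k ≠ 0)
    (hsy : ∀ k, k₀ ≤ k → ⟪s (k - 1), y (k - 1)⟫ ≠ 0)
    (hκ : ∀ k, k₀ ≤ k → κ k = ⟪s (k - 1), y (k - 1)⟫ / ‖s (k - 1)‖ ^ 2)
    (hiter : ∀ k, k₀ ≤ k → x (k + 1) = x k - (κ k)⁻¹ • F (x k))
    (xstar : EuclideanSpace ℝ (Fin n))
    (hxlim : Tendsto x atTop (𝓝 xstar))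
    (hJinv : Function.Bijective (fderiv ℝ F xstar))
    (sLim : EuclideanSpace ℝ (Fin n))
    (hslim : Tendsto (fun k => (‖s k‖)⁻¹ • s k) atTop (𝓝 sLim)) :
    Tendsto (fun k => κ (k + 1)) atTop (𝓝 ⟪sLim, fderiv ℝ F xstar sLim⟫) ∧
    F xstar = 0 ∧
    Tendsto (fun k => ‖x (k + 1) - xstar‖ / ‖x k - xstar‖) atTop (𝓝 0) := by
  have hxcl : ∀ k, x k ∈ closure U := fun k => subset_closure (hxU k)
  have hp : xstar ∈ closure U := isClosed_closure.mem_of_tendsto hxlim (.of_forall hxcl)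
  have hfderiv : UniformContinuousOn (fderiv ℝ F) U :=
    (LipschitzOnWith.of_dist_le_mul (K := L.toNNReal) fun a ha b hb => by
      simpa only [dist_eq_norm, Real.coe_toNNReal L hL.le] using hLip a ha b hb).uniformContinuousOn
  have hJ : IsInducing (fderiv ℝ F xstar) :=
    (LinearMap.isClosedEmbedding_of_injective
      (LinearMap.ker_eq_bot.2 hJinv.injective)).isInducing
  exact secant_accel_stmt12_general
    (hasFDerivAtFilter_closure_of_uniformContinuousOn_fderiv hUopen hUconv (fun z _ => hF z)
      hfderiv hp) hp hJ
    (tendsto_nhdsWithin_iff.2 ⟨hxlim, .of_forall hxcl⟩) hs hy (eventually_atTop.2 ⟨k₀, hsne⟩)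
    (eventually_atTop.2 ⟨k₀, fun k hk => hκ (k + 1) (by lia)⟩)
    (eventually_atTop.2 ⟨k₀, hiter⟩) hslim
end

section
/- Let F : ℝⁿ → ℝⁿ, let (x^k) be a sequence in ℝⁿ, set s^k = x^{k+1} − x^k and y^k = F(x^{k+1}) − F(x^k), and let (H_k) be a sequence of n×n real matrices (in the paper, H_k = S_k Y_k†, the product of the increment matrix S_k with the Moore–Penrose pseudoinverse of Y_k, so that H_{k+1} y^k = s^k when Y_{k+1} has linearly independent columns). Assume: (H1) there is k₁ such that x^{k+1} = x^k − H_k F(x^k) for all k ≥ k₁; (H2) H_{k+1} y^k = s^k for all k, and there is a sequence β_k > 0 with β_k → 0 such that ‖(H_{k+1} − H_k) y^k‖ ≤ β_k ‖y^k‖ for all k large enough; (H3) there exists c > 0 with ‖H_k F(x^{k+1})‖ ≥ c ‖F(x^{k+1})‖ for all k large enough. Then for all k large enough (so that β_k < c), ‖F(x^{k+1})‖ ≤ (β_k/(c − β_k)) ‖F(x^k)‖; in particular ‖F(x^k)‖ converges Q-superlinearly to 0. -/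
open Filter Topology

/-!
By the secant equation and the iteration, all of `(H_{k+1} - H_k) y^k` cancels except
`-H_k F(x^{k+1})`. Hence (H3) and (H2) give
`c ‖F(x^{k+1})‖ ≤ β_k ‖F(x^{k+1}) - F(x^k)‖`, and the triangle inequality lets `‖F(x^{k+1})‖` be
absorbed into the left-hand side once `β_k < c`.
-/

theorem apply_sub_apply_eq_neg_of_secant {E G : Type*} [AddCommGroup E] [AddGroup G]
    {H H' : G →+ E} {x x' : E} {g g' : G} (hstep : x' = x - H g)
    (hsecant : H' (g' - g) = x' - x) : H' (g' - g) - H (g' - g) = -H g' := by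
  rw [hsecant, hstep, map_sub]
  abel

theorem norm_le_div_sub_mul_norm {G : Type*} [SeminormedAddGroup G] {u v : G} {b c : ℝ}
    (hb : 0 ≤ b) (hbc : b < c) (h : c * ‖u‖ ≤ b * ‖u - v‖) :
    ‖u‖ ≤ b / (c - b) * ‖v‖ := by
  have triangle : c * ‖u‖ ≤ b * (‖u‖ + ‖v‖) :=
    h.trans (mul_le_mul_of_nonneg_left (norm_sub_le u v) hb)
  rw [div_mul_eq_mul_div, le_div_iff₀ (sub_pos.2 hbc)]
  linarith

theorem norm_le_div_sub_mul_norm_of_secant {E G : Type*} [SeminormedAddCommGroup E]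
    [SeminormedAddGroup G] {H H' : G →+ E} {x x' : E} {g g' : G} {b c : ℝ}
    (hstep : x' = x - H g) (hsecant : H' (g' - g) = x' - x) (hb : 0 ≤ b) (hbc : b < c)
    (hchange : ‖H' (g' - g) - H (g' - g)‖ ≤ b * ‖g' - g‖) (hlower : c * ‖g'‖ ≤ ‖H g'‖) :
    ‖g'‖ ≤ b / (c - b) * ‖g‖ := by
  rw [apply_sub_apply_eq_neg_of_secant hstep hsecant, norm_neg] at hchange
  exact norm_le_div_sub_mul_norm hb hbc (hlower.trans hchange)

theorem tendsto_div_const_sub_self {α 𝕜 : Type*} [DivisionRing 𝕜] [TopologicalSpace 𝕜]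
    [IsTopologicalDivisionRing 𝕜] {l : Filter α} {β : α → 𝕜} {c : 𝕜} (hc : c ≠ 0)
    (hβ : Tendsto β l (𝓝 0)) : Tendsto (fun a => β a / (c - β a)) l (𝓝 0) := by
  have hsub : Tendsto (fun a => c - β a) l (𝓝 c) := by simpa only [sub_zero] using hβ.const_sub c
  simpa only [zero_div, Pi.div_def] using hβ.div hsub hc

theorem secant_accel_stmt16_general {E G : Type*} [SeminormedAddCommGroup E]
    [SeminormedAddGroup G] {F : E → G} {x : ℕ → E} {H : ℕ → G →+ E} {β : ℕ → ℝ} {c : ℝ}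
    (hstep : ∀ᶠ k in atTop, x (k + 1) = x k - H k (F (x k)))
    (hsecant : ∀ᶠ k in atTop, H (k + 1) (F (x (k + 1)) - F (x k)) = x (k + 1) - x k)
    (hβ : ∀ᶠ k in atTop, 0 ≤ β k) (hβ0 : Tendsto β atTop (𝓝 0))
    (hchange : ∀ᶠ k in atTop,
      ‖H (k + 1) (F (x (k + 1)) - F (x k)) - H k (F (x (k + 1)) - F (x k))‖ ≤
        β k * ‖F (x (k + 1)) - F (x k)‖)
    (hc : 0 < c) (hlower : ∀ᶠ k in atTop, c * ‖F (x (k + 1))‖ ≤ ‖H k (F (x (k + 1)))‖) :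
    (∀ᶠ k in atTop, β k < c ∧ ‖F (x (k + 1))‖ ≤ β k / (c - β k) * ‖F (x k)‖) ∧
    ∃ r : ℕ → ℝ, Tendsto r atTop (𝓝 0) ∧
      ∀ᶠ k in atTop, ‖F (x (k + 1))‖ ≤ r k * ‖F (x k)‖ := by
  have hbound : ∀ᶠ k in atTop,
      β k < c ∧ ‖F (x (k + 1))‖ ≤ β k / (c - β k) * ‖F (x k)‖ := by
    filter_upwards [hstep, hsecant, hβ, hβ0.eventually_lt_const hc, hchange, hlower]
      with k hstep hsecant hβ hβc hchange hlower
    exact ⟨hβc, norm_le_div_sub_mul_norm_of_secant hstep hsecant hβ hβc hchange hlower⟩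
  exact ⟨hbound, fun k => β k / (c - β k), tendsto_div_const_sub_self hc.ne' hβ0,
    hbound.mono fun _ h => h.2⟩

/-- Theorem 4.1: for the accelerated iteration `x^{k+1} = x^k − H_k F(x^k)`
(H1) with the secant property `H_{k+1} y^k = s^k`, consistency bound
`‖(H_{k+1} − H_k) y^k‖ ≤ β_k ‖y^k‖` with `β_k → 0` (H2), and lower bound
`‖H_k F(x^{k+1})‖ ≥ c ‖F(x^{k+1})‖` (H3), one eventually has
`‖F(x^{k+1})‖ ≤ (β_k/(c − β_k)) ‖F(x^k)‖`; in particular `‖F(x^k)‖ → 0`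
Q-superlinearly. -/
theorem secant_accel_stmt16 {n : ℕ}
    (F : EuclideanSpace ℝ (Fin n) → EuclideanSpace ℝ (Fin n))
    (x : ℕ → EuclideanSpace ℝ (Fin n))
    (s y : ℕ → EuclideanSpace ℝ (Fin n))
    (hs : ∀ k, s k = x (k + 1) - x k)
    (hy : ∀ k, y k = F (x (k + 1)) - F (x k))
    (H : ℕ → (EuclideanSpace ℝ (Fin n) →L[ℝ] EuclideanSpace ℝ (Fin n)))
    (hH1 : ∃ k₁ : ℕ, ∀ k, k₁ ≤ k → x (k + 1) = x k - H k (F (x k)))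
    (hsecant : ∀ k, H (k + 1) (y k) = s k)
    (β : ℕ → ℝ) (hβpos : ∀ k, 0 < β k) (hβ0 : Tendsto β atTop (𝓝 0))
    (hH2 : ∃ k₂ : ℕ, ∀ k, k₂ ≤ k → ‖(H (k + 1) - H k) (y k)‖ ≤ β k * ‖y k‖)
    (c : ℝ) (hc : 0 < c)
    (hH3 : ∃ k₃ : ℕ, ∀ k, k₃ ≤ k → c * ‖F (x (k + 1))‖ ≤ ‖H k (F (x (k + 1)))‖) :
    (∃ K : ℕ, ∀ k, K ≤ k →
      β k < c ∧ ‖F (x (k + 1))‖ ≤ (β k / (c - β k)) * ‖F (x k)‖) ∧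
    ∃ r : ℕ → ℝ, Tendsto r atTop (𝓝 0) ∧
      ∃ K : ℕ, ∀ k, K ≤ k → ‖F (x (k + 1))‖ ≤ r k * ‖F (x k)‖ := by
  obtain rfl := funext hs
  obtain rfl := funext hy
  simpa only [eventually_atTop] using
    secant_accel_stmt16_general (H := fun k => (H k).toLinearMap.toAddMonoidHom)
      (eventually_atTop.2 hH1) (.of_forall hsecant) (.of_forall fun k => (hβpos k).le)
      hβ0 (eventually_atTop.2 hH2) hc (eventually_atTop.2 hH3)
end
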